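/- arXiv:2511.18959 — 2 statements merged into one kernel-verified Lean document; each statement's English description precedes it below -/
import Mathlib

section
/- Let V be an abelian group with an 𝔈(r)-representation, and let W := {v ∈ V : P_{a,i}(v) = 0 for all a > 0 and i ∈ [r], and Q_{a,i}(v) = 0 for all a ≤ 0 and i ∈ [r]}. Then the operators E_{[r]} := Q_{0,[r]} ∘ E and F_{[r]} := P_{1,[r]} ∘ F map W into W, and their restrictions to W are mutually inverse bijections of W. -/
theorem aux_kill {V : Type*} [AddCommGroup V] {ι : Type*} (X : AddMonoid.End V)
    (B : ι → AddMonoid.End V) (v : V) (hv : X v = 0) (l : List ι)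
    (h : ∀ i ∈ l, ∀ w, X (B i w) + B i (X w) = 0) : X ((l.map B).prod v) = 0 := by
  induction l with
  | nil => simpa using hv
  | cons i t ih =>
    have ih' := ih (fun j hj => h j (List.mem_cons_of_mem _ hj))
    have h1 := h i List.mem_cons_self ((t.map B).prod v)
    rw [ih', map_zero, add_zero] at h1
    simpa using h1

theorem aux_kill_mem {V : Type*} [AddCommGroup V] {ι : Type*}
    (B : ι → AddMonoid.End V) (k : ι) (v : V) (hs : ∀ w, B k (B k w) = 0) (l : List ι) (hk : k ∈ l)
    (h : ∀ i, ∀ w, B k (B i w) + B i (B k w) = 0) : B k ((l.map B).prod v) = 0 := by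
  induction l with
  | nil => simp at hk
  | cons i t ih =>
    rcases List.mem_cons.1 hk with rfl | hk
    · simpa using hs _
    · have h1 := h i ((t.map B).prod v)
      rw [ih hk, map_zero, add_zero] at h1
      simpa using h1

theorem aux_inv {V : Type*} [AddCommGroup V] {ι : Type*}
    (A B : ι → AddMonoid.End V) (v : V) (l : List ι) (hl : l.Nodup)
    (h1 : ∀ i, ∀ w, A i (B i w) + B i (A i w) = w)
    (h2 : ∀ i j, i ≠ j → ∀ w, A i (B j w) + B j (A i w) = 0)
    (hv : ∀ i, A i v = 0) : (l.reverse.map A).prod ((l.map B).prod v) = v := by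
  induction l with
  | nil => simp
  | cons i t ih =>
    obtain ⟨hi, ht⟩ := List.nodup_cons.1 hl
    have h3 := aux_kill (A i) B v (hv i) t
      (fun j hj => h2 i j (fun e => hi (e ▸ hj)))
    have h4 := h1 i ((t.map B).prod v)
    rw [h3, map_zero, add_zero] at h4
    have := ih ht
    simp only [List.reverse_cons, List.map_append, List.map_cons, List.map_nil, List.prod_append,
      List.prod_cons, List.prod_nil, mul_one, AddMonoid.End.coe_mul, Function.comp_apply]
    rw [h4, this]

theorem aux_shift {V : Type*} [AddCommGroup V] {ι : Type*} (X : AddMonoid.End V)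
    (A B : ι → AddMonoid.End V) (h : ∀ i w, X (A i w) = B i (X w)) (l : List ι) (v : V) :
    X ((l.map A).prod v) = (l.map B).prod (X v) := by
  induction l with
  | nil => simp
  | cons i t ih => simp [h, ih]

/-- The ordered product `Q_{a,I} = Q_{a,a_0} ∘ ⋯ ∘ Q_{a,a_k}` for `I = {a_0 < ⋯ < a_k}`. -/
def qaProd {r : ℕ} {V : Type*} [AddCommGroup V] (Q : ℤ → Fin r → AddMonoid.End V)
    (a : ℤ) (I : Finset (Fin r)) : AddMonoid.End V :=
  ((I.sort (· ≤ ·)).map (Q a)).prod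

/-- The ordered product `P_{a,I} = P_{a,a_k} ∘ ⋯ ∘ P_{a,a_0}` for `I = {a_0 < ⋯ < a_k}`. -/
def paProd {r : ℕ} {V : Type*} [AddCommGroup V] (P : ℤ → Fin r → AddMonoid.End V)
    (a : ℤ) (I : Finset (Fin r)) : AddMonoid.End V :=
  ((I.sort (· ≤ ·)).reverse.map (P a)).prod

/-- An `𝔈(r)`-representation on an abelian group `V`: operators `P_{a,i}`, `Q_{a,i}`
and a pair of mutually inverse shifts `E`, `F = E⁻¹`, subject to the defining relations
of the infinite-dimensional Clifford algebra `𝔈(r)`. -/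
structure ERep (r : ℕ) (V : Type*) [AddCommGroup V] where
  P : ℤ → Fin r → AddMonoid.End V
  Q : ℤ → Fin r → AddMonoid.End V
  E : AddMonoid.End V
  F : AddMonoid.End V
  EF_eq : E * F = 1
  FE_eq : F * E = 1
  P_sq : ∀ (a : ℤ) (i : Fin r), P a i * P a i = 0
  Q_sq : ∀ (a : ℤ) (i : Fin r), Q a i * Q a i = 0
  E_P : ∀ (a : ℤ) (i : Fin r), E * P a i = P (a - 1) i * E
  E_Q : ∀ (a : ℤ) (i : Fin r), E * Q a i = Q (a - 1) i * E
  P_P : ∀ (a b : ℤ) (i j : Fin r), P a i * P b j + P b j * P a i = 0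
  Q_Q : ∀ (a b : ℤ) (i j : Fin r), Q a i * Q b j + Q b j * Q a i = 0
  P_Q : ∀ (a b : ℤ) (i j : Fin r),
    P a i * Q b j + Q b j * P a i = if i = j ∧ a = b then 1 else 0

/-!
Statement 17: on `W := {v : P_{a,i} v = 0 for a > 0, Q_{a,i} v = 0 for a ≤ 0}`, the
operators `E_{[r]} := Q_{0,[r]} ∘ E` and `F_{[r]} := P_{1,[r]} ∘ F` are closed and
mutually inverse bijections.
-/

theorem stmt_17 {r : ℕ} (hr : 0 < r) {V : Type} [AddCommGroup V] (ρ : ERep r V)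
    (W : Set V)
    (hW : W = {v : V | (∀ a : ℤ, 0 < a → ∀ i : Fin r, ρ.P a i v = 0) ∧
      (∀ a : ℤ, a ≤ 0 → ∀ i : Fin r, ρ.Q a i v = 0)}) :
    ∀ v ∈ W,
      (qaProd ρ.Q 0 Finset.univ * ρ.E) v ∈ W ∧
      (paProd ρ.P 1 Finset.univ * ρ.F) v ∈ W ∧
      (paProd ρ.P 1 Finset.univ * ρ.F) ((qaProd ρ.Q 0 Finset.univ * ρ.E) v) = v ∧
      (qaProd ρ.Q 0 Finset.univ * ρ.E) ((paProd ρ.P 1 Finset.univ * ρ.F) v) = v := by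
  have EF : ∀ w, ρ.E (ρ.F w) = w := fun w => DFunLike.congr_fun ρ.EF_eq w
  have FE : ∀ w, ρ.F (ρ.E w) = w := fun w => DFunLike.congr_fun ρ.FE_eq w
  have EP : ∀ a i w, ρ.E (ρ.P a i w) = ρ.P (a - 1) i (ρ.E w) :=
    fun a i w => DFunLike.congr_fun (ρ.E_P a i) w
  have EQ : ∀ a i w, ρ.E (ρ.Q a i w) = ρ.Q (a - 1) i (ρ.E w) :=
    fun a i w => DFunLike.congr_fun (ρ.E_Q a i) w
  have FP : ∀ a i w, ρ.F (ρ.P a i w) = ρ.P (a + 1) i (ρ.F w) := by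
    intro a i w
    have := EP (a + 1) i (ρ.F w)
    rw [EF, add_sub_cancel_right] at this
    rw [← this, FE]
  have FQ : ∀ a i w, ρ.F (ρ.Q a i w) = ρ.Q (a + 1) i (ρ.F w) := by
    intro a i w
    have := EQ (a + 1) i (ρ.F w)
    rw [EF, add_sub_cancel_right] at this
    rw [← this, FE]
  have PS : ∀ a i w, ρ.P a i (ρ.P a i w) = 0 := fun a i w => DFunLike.congr_fun (ρ.P_sq a i) w
  have QS : ∀ a i w, ρ.Q a i (ρ.Q a i w) = 0 := fun a i w => DFunLike.congr_fun (ρ.Q_sq a i) w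
  have PP : ∀ a b i j w, ρ.P a i (ρ.P b j w) + ρ.P b j (ρ.P a i w) = 0 :=
    fun a b i j w => DFunLike.congr_fun (ρ.P_P a b i j) w
  have QQ : ∀ a b i j w, ρ.Q a i (ρ.Q b j w) + ρ.Q b j (ρ.Q a i w) = 0 :=
    fun a b i j w => DFunLike.congr_fun (ρ.Q_Q a b i j) w
  have PQ1 : ∀ a i w, ρ.P a i (ρ.Q a i w) + ρ.Q a i (ρ.P a i w) = w := by
    intro a i w
    have := ρ.P_Q a a i i
    rw [if_pos ⟨rfl, rfl⟩] at this
    exact DFunLike.congr_fun this w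
  have PQ0 : ∀ a b i j, ¬ (i = j ∧ a = b) → ∀ w,
      ρ.P a i (ρ.Q b j w) + ρ.Q b j (ρ.P a i w) = 0 := by
    intro a b i j h w
    have := ρ.P_Q a b i j
    rw [if_neg h] at this
    exact DFunLike.congr_fun this w
  subst hW
  rintro v ⟨hP, hQ⟩
  have hnd : (Finset.univ.sort (· ≤ ·) : List (Fin r)).Nodup := Finset.sort_nodup _ _
  have hmem : ∀ i, i ∈ (Finset.univ.sort (· ≤ ·) : List (Fin r)) := by simp
  simp only [AddMonoid.End.coe_mul, Function.comp_apply, qaProd, paProd, Set.mem_ofPred_eq]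
  generalize (Finset.univ.sort (· ≤ ·) : List (Fin r)) = l at hnd hmem ⊢
  have hPE : ∀ a : ℤ, 0 ≤ a → ∀ i, ρ.P a i (ρ.E v) = 0 := by
    intro a ha i
    have := EP (a + 1) i v
    rw [hP _ (by omega), map_zero, add_sub_cancel_right] at this
    exact this.symm
  have hQE : ∀ a : ℤ, a < 0 → ∀ i, ρ.Q a i (ρ.E v) = 0 := by
    intro a ha i
    have := EQ (a + 1) i v
    rw [hQ _ (by omega), map_zero, add_sub_cancel_right] at this
    exact this.symm
  have hPF : ∀ a : ℤ, 1 < a → ∀ i, ρ.P a i (ρ.F v) = 0 := by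
    intro a ha i
    have := FP (a - 1) i v
    rw [hP _ (by omega), map_zero, sub_add_cancel] at this
    exact this.symm
  have hQF : ∀ a : ℤ, a ≤ 1 → ∀ i, ρ.Q a i (ρ.F v) = 0 := by
    intro a ha i
    have := FQ (a - 1) i v
    rw [hQ _ (by omega), map_zero, sub_add_cancel] at this
    exact this.symm
  refine ⟨⟨?_, ?_⟩, ⟨?_, ?_⟩, ?_, ?_⟩
  · intro a ha i
    exact aux_kill _ _ _ (hPE a ha.le i) _ (fun j _ w => PQ0 a 0 i j (by omega) w)
  · intro a ha i
    rcases ha.lt_or_eq with ha | rfl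
    · exact aux_kill _ _ _ (hQE a ha i) _ (fun j _ w => QQ a 0 i j w)
    · exact aux_kill_mem (ρ.Q 0) i _ (QS 0 i) _ (hmem i) (fun j w => QQ 0 0 i j w)
  · intro a ha i
    by_cases h : a = 1
    · subst h
      exact aux_kill_mem (ρ.P 1) i _ (PS 1 i) _ (List.mem_reverse.2 (hmem i))
        (fun j w => PP 1 1 i j w)
    · exact aux_kill _ _ _ (hPF a (by omega) i) _ (fun j _ w => PP a 1 i j w)
  · intro a ha i
    refine aux_kill _ _ _ (hQF a (by omega) i) _ (fun j _ w => ?_)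
    rw [add_comm]
    exact PQ0 1 a j i (by omega) w
  · rw [aux_shift ρ.F (ρ.Q 0) (ρ.Q 1) (fun i w => FQ 0 i w), FE]
    exact aux_inv (ρ.P 1) (ρ.Q 1) v l hnd (PQ1 1) (fun i j h => PQ0 1 1 i j (by tauto))
      (hP 1 one_pos)
  · rw [aux_shift ρ.E (ρ.P 1) (ρ.P 0) (fun i w => EP 1 i w), EF]
    have := aux_inv (ρ.Q 0) (ρ.P 0) v l.reverse (List.nodup_reverse.2 hnd)
      (fun i w => by rw [add_comm]; exact PQ1 0 i w)
      (fun i j h w => by rw [add_comm]; exact PQ0 0 0 j i (by tauto) w) (hQ 0 le_rfl)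
    rwa [List.reverse_reverse] at this
end

section
/- Let V be an abelian group with an 𝔈(r)-representation. Set W := {v ∈ V : P_{a,i}(v) = 0 for all a > 0 and i ∈ [r], and Q_{a,i}(v) = 0 for all a ≤ 0 and i ∈ [r]}, 𝓗_∞(V) := {v ∈ V : there exists m with P_{a,i}(v) = 0 for all a > m and i ∈ [r]}, and 𝓚_{−∞}(V) := {v ∈ V : there exists m with Q_{a,i}(v) = 0 for all a ≤ m and i ∈ [r]}. For each r-Maya diagram 𝔪, choose N ≥ 1 with I_a = ∅ for all a > N and I_a = [r] for all a ≤ −N, and define the additive endomorphism Θ_𝔪 := λ_𝔪 · Q_{N,I_N} ∘ ⋯ ∘ Q_{2,I_2} ∘ Q_{1,I_1} ∘ P_{0,[r]∖I_0} ∘ P_{−1,[r]∖I_{−1}} ∘ ⋯ ∘ P_{−N,[r]∖I_{−N}} of V, where λ_𝔪 := (−1)^{Σ_{k≤0} k·r·(r−|I_k|)}; this is independent of the choice of N since Q_{a,∅} = P_{a,∅} = id_V. Then the ℤ-linear map from the direct sum ⊕_𝔪 W (indexed by all r-Maya diagrams 𝔪) to V sending (w_𝔪)_𝔪 to Σ_𝔪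 Θ_𝔪(w_𝔪) is injective with image exactly 𝓚_{−∞}(V) ∩ 𝓗_∞(V). -/
/-- An `r`-Maya diagram: a function `ℤ → Finset (Fin r)` which is eventually the full set
`[r]` in the negative direction and eventually empty in the positive direction. -/
structure MayaDiagram (r : ℕ) where
  idx : ℤ → Finset (Fin r)
  eventually_full : ∃ N : ℤ, ∀ a : ℤ, a < N → idx a = Finset.univ
  eventually_empty : ∃ N : ℤ, ∀ a : ℤ, N < a → idx a = ∅

/-- `N` is an admissible cutoff for the Maya diagram `m`: `N ≥ 1`, `I_a = ∅` for `a > N`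
and `I_a = [r]` for `a ≤ −N`. -/
def GoodCutoff {r : ℕ} (m : MayaDiagram r) (N : ℕ) : Prop :=
  1 ≤ N ∧ (∀ a : ℤ, (N : ℤ) < a → m.idx a = ∅) ∧
    (∀ a : ℤ, a ≤ -(N : ℤ) → m.idx a = Finset.univ)

/-- The sign `λ_m = (−1)^{Σ_{k≤0} k·r·(r−|I_k|)}` (written with the nonnegative exponent
`Σ_{k≤0} (−k)·r·(r−|I_k|)`, which yields the same sign). -/
noncomputable def mayaSign {r : ℕ} (m : MayaDiagram r) : ℤ :=
  (-1 : ℤ) ^ (∑ᶠ k ∈ {k : ℤ | k ≤ 0}, ((-k).toNat * r * (r - (m.idx k).card)))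

/-- The operator
`Θ_m := λ_m · Q_{N,I_N} ∘ ⋯ ∘ Q_{1,I_1} ∘ P_{0,[r]∖I_0} ∘ ⋯ ∘ P_{−N,[r]∖I_{−N}}`. -/
noncomputable def Theta {r : ℕ} {V : Type*} [AddCommGroup V] (ρ : ERep r V)
    (m : MayaDiagram r) (N : ℕ) : AddMonoid.End V :=
  mayaSign m •
    (((List.range N).map (fun t => qaProd ρ.Q ((N : ℤ) - t) (m.idx ((N : ℤ) - t)))).prod *
      ((List.range (N + 1)).map
        (fun t => paProd ρ.P (-(t : ℤ)) (Finset.univ \ m.idx (-(t : ℤ))))).prod)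

section FockAbstract

theorem fockMul {V : Type*} [AddCommGroup V] (f g : AddMonoid.End V) (v : V) :
    (f * g) v = f (g v) := rfl

theorem fockNeg {V : Type*} [AddCommGroup V] (f : AddMonoid.End V) (v : V) :
    (-f) v = -f v := rfl

structure FockCAR {κ V : Type*} [AddCommGroup V] (A C : κ → AddMonoid.End V) : Prop where
  aa : ∀ x y v, A x (A y v) = -A y (A x v)
  aa0 : ∀ x v, A x (A x v) = 0
  cc : ∀ x y v, C x (C y v) = -C y (C x v)
  ac : ∀ x y v, x ≠ y → A x (C y v) = -C y (A x v)
  ac' : ∀ x v, A x (C x v) = v - C x (A x v)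

variable {κ V : Type*} [AddCommGroup V] {A C : κ → AddMonoid.End V}

theorem FockCAR.kill (h : FockCAR A C) (x : κ) (l : List κ) (hx : x ∉ l) (v : V)
    (hv : A x v = 0) : A x ((l.map C).prod v) = 0 := by
  induction l with
  | nil => simpa using hv
  | cons y l ih =>
    simp only [List.mem_cons, not_or] at hx
    simp only [List.map_cons, List.prod_cons, fockMul]
    rw [h.ac x y _ hx.1, ih hx.2]; simp

theorem FockCAR.ann (h : FockCAR A C) (x : κ) (l : List κ) (hx : x ∈ l) (v : V)
    (hv : A x v = 0) : (l.reverse.map A).prod v = 0 := by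
  induction l generalizing v with
  | nil => simp at hx
  | cons y l ih =>
    simp only [List.reverse_cons, List.map_append, List.map_cons, List.map_nil, List.prod_append,
      List.prod_singleton, fockMul]
    rcases List.mem_cons.1 hx with rfl | hx
    · rw [hv]; simp
    · have hz : A x (A y v) = 0 := by rw [h.aa, hv]; simp
      exact ih hx _ hz

theorem FockCAR.inv (h : FockCAR A C) (l : List κ) (hl : l.Nodup) (v : V)
    (hv : ∀ x, A x v = 0) : (l.reverse.map A).prod ((l.map C).prod v) = v := by
  induction l with
  | nil => simp
  | cons y l ih =>
    simp only [List.nodup_cons] at hl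
    simp only [List.reverse_cons, List.map_append, List.map_cons, List.map_nil, List.prod_append,
      List.prod_nil, mul_one, fockMul, List.prod_cons]
    rw [h.ac', h.kill y l hl.1 v (hv y)]
    simpa using ih hl.2

theorem FockCAR.perm (h : FockCAR A C) {l l' : List κ} (p : l.Perm l') :
    (l.map C).prod = (l'.map C).prod ∨ (l.map C).prod = -(l'.map C).prod := by
  induction p with
  | nil => simp
  | cons x p ih =>
    rcases ih with ih | ih
    · left; simp [ih]
    · right; simp [ih]
  | swap x y l =>
    right
    ext v
    simp only [List.map_cons, List.prod_cons, fockMul]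
    rw [h.cc]; rfl
  | trans p q ih1 ih2 =>
    rcases ih1 with ih1 | ih1 <;> rcases ih2 with ih2 | ih2 <;> simp [ih1, ih2]

theorem FockCAR.span [DecidableEq κ] (h : FockCAR A C) (W : AddSubgroup V)
    (hW : ∀ v, v ∈ W ↔ ∀ x, A x v = 0) (B : Finset κ) (v : V) (hv : ∀ x, x ∉ B → A x v = 0) :
    v ∈ AddSubgroup.closure {u : V | ∃ l : List κ, l.Nodup ∧ (∀ x ∈ l, x ∈ B) ∧
      ∃ w ∈ W, u = (l.map C).prod w} := by
  induction B using Finset.induction_on generalizing v with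
  | empty =>
    apply AddSubgroup.subset_closure
    exact ⟨[], by simp, by simp, v, (hW v).2 (fun x => hv x (by simp)), by simp⟩
  | insert x B hx ih =>
    have e : v = A x (C x v) + C x (A x v) := by rw [h.ac']; abel
    rw [e]
    refine AddSubgroup.add_mem _ ?_ ?_
    · refine AddSubgroup.closure_mono ?_ (ih (A x (C x v)) ?_)
      · rintro u ⟨l, h1, h2, w, h3, h4⟩
        exact ⟨l, h1, fun y hy => Finset.mem_insert_of_mem (h2 y hy), w, h3, h4⟩
      · intro y hy
        by_cases hxy : y = x
        · subst hxy; exact h.aa0 _ _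
        · rw [h.aa, h.ac y x _ hxy, hv y (by simp [hxy, hy])]; simp
    · have h1 := ih (A x v) (by
        intro y hy
        by_cases hxy : y = x
        · subst hxy; exact h.aa0 _ _
        · rw [h.aa, hv y (by simp [hxy, hy])]; simp)
      have h2 := AddSubgroup.mem_map_of_mem (C x : V →+ V) h1
      have h3 := AddMonoidHom.map_closure (C x : V →+ V) {u : V | ∃ l : List κ, l.Nodup ∧
        (∀ x ∈ l, x ∈ B) ∧ ∃ w ∈ W, u = (l.map C).prod w}
      replace h2 := h3.le h2
      refine AddSubgroup.closure_mono ?_ h2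
      rintro _ ⟨u, ⟨l, h1, h2, w, h3, rfl⟩, rfl⟩
      refine ⟨x :: l, ?_, ?_, w, h3, ?_⟩
      · exact List.nodup_cons.2 ⟨fun hh => hx (h2 x hh), h1⟩
      · intro y hy
        rcases List.mem_cons.1 hy with rfl | hy
        · simp
        · exact Finset.mem_insert_of_mem (h2 y hy)
      · simp only [List.map_cons, List.prod_cons, fockMul]; rfl

theorem FockCAR.main [DecidableEq κ] (h : FockCAR A C) (W : AddSubgroup V)
    (hW : ∀ v, v ∈ W ↔ ∀ x, A x v = 0) {M : Type*} (L : M → List κ) (hL : ∀ m, (L m).Nodup)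
    (hinj : Function.Injective (fun m => (L m).toFinset))
    (hsur : Function.Surjective (fun m => (L m).toFinset))
    (T : M → AddMonoid.End V)
    (hT : ∀ m, T m = ((L m).map C).prod ∨ T m = -((L m).map C).prod) :
    Function.Injective (fun g : M →₀ W => g.sum (fun m w => T m (w : V))) ∧
    Set.range (fun g : M →₀ W => g.sum (fun m w => T m (w : V))) =
      {v | ∃ B : Finset κ, ∀ x, x ∉ B → A x v = 0} := by
  classical
  let Φ : (M →₀ W) →+ V := Finsupp.liftAddHom (fun m => (T m : V →+ V).comp W.subtype)
  have hΦ : ∀ g : M →₀ W, g.sum (fun m w => T m (w : V)) = Φ g := fun g => rfl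
  have hsingle : ∀ m w, Φ (Finsupp.single m w) = T m (w : V) := by
    intro m w; simp only [Φ, Finsupp.liftAddHom_apply_single]; rfl
  constructor
  · change Function.Injective Φ
    rw [injective_iff_map_eq_zero]
    intro g hg
    by_contra hne
    obtain ⟨m, hm, hmax⟩ := g.support.exists_max_image (fun m => (L m).toFinset.card)
      (Finsupp.support_nonempty_iff.2 hne)
    have h0 : ((L m).reverse.map A).prod (Φ g) = 0 := by rw [hg]; simp
    rw [← hΦ, Finsupp.sum, map_sum, Finset.sum_eq_single_of_mem m hm] at h0
    · have hw := h.inv (L m) (hL m) (g m : V) ((hW _).1 (g m).2)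
      have : (g m : V) = 0 := by
        rcases hT m with e | e
        · rw [e, hw] at h0; exact h0
        · rw [e, fockNeg, map_neg, hw] at h0; simpa using h0
      exact (Finsupp.mem_support_iff.1 hm) (Subtype.ext this)
    · intro m' hm' hne'
      have : ¬ (L m).toFinset ⊆ (L m').toFinset := fun hs =>
        hne' (hinj (Finset.eq_of_subset_of_card_le hs (hmax m' hm')).symm)
      obtain ⟨x, hx, hx'⟩ := Finset.not_subset.1 this
      have hz := h.ann x (L m) (by simpa using hx) _
        (h.kill x (L m') (by simpa using hx') (g m' : V) ((hW _).1 (g m').2 x))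
      rcases hT m' with e | e
      · rw [e, hz]
      · rw [e, fockNeg, map_neg, hz, neg_zero]
  · ext v
    constructor
    · rintro ⟨g, rfl⟩
      refine ⟨g.support.biUnion (fun m => (L m).toFinset), fun x hx => ?_⟩
      simp only [Finset.mem_biUnion, not_exists, not_and] at hx
      simp only [Finsupp.sum]
      rw [map_sum]
      refine Finset.sum_eq_zero fun m hm => ?_
      have hz := h.kill x (L m) (by simpa using hx m hm) (g m : V) ((hW _).1 (g m).2 x)
      rcases hT m with e | e
      · rw [e, hz]
      · rw [e, fockNeg, map_neg, hz, neg_zero]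
    · rintro ⟨B, hB⟩
      change v ∈ Φ.range
      refine (AddSubgroup.closure_le _).2 ?_ (h.span W hW B v hB)
      rintro _ ⟨l, hl, -, w, hw, rfl⟩
      obtain ⟨m, hm⟩ := hsur l.toFinset
      have p : l.Perm (L m) := (List.perm_of_nodup_nodup_toFinset_eq (hL m) hl hm).symm
      have h1 : T m w ∈ Φ.range := ⟨Finsupp.single m ⟨w, hw⟩, hsingle _ _⟩
      have h2 : (l.map C).prod w = T m w ∨ (l.map C).prod w = -T m w := by
        rcases h.perm p with e1 | e1 <;> rcases hT m with e2 | e2 <;> simp [e1, e2, fockNeg]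
      rcases h2 with e | e
      · rw [SetLike.mem_coe, e]; exact h1
      · rw [SetLike.mem_coe, e]; exact neg_mem h1

end FockAbstract

section FockMaya

def mayaA {r : ℕ} {V : Type*} [AddCommGroup V] (ρ : ERep r V) (x : ℤ × Fin r) :
    AddMonoid.End V := if 0 < x.1 then ρ.P x.1 x.2 else ρ.Q x.1 x.2

def mayaC {r : ℕ} {V : Type*} [AddCommGroup V] (ρ : ERep r V) (x : ℤ × Fin r) :
    AddMonoid.End V := if 0 < x.1 then ρ.Q x.1 x.2 else ρ.P x.1 x.2

theorem mayaCAR {r : ℕ} {V : Type*} [AddCommGroup V] (ρ : ERep r V) :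
    FockCAR (mayaA ρ) (mayaC ρ) := by
  have PP : ∀ a b i j v, ρ.P a i (ρ.P b j v) = -ρ.P b j (ρ.P a i v) := fun a b i j v =>
    eq_neg_of_add_eq_zero_left (DFunLike.congr_fun (ρ.P_P a b i j) v)
  have QQ : ∀ a b i j v, ρ.Q a i (ρ.Q b j v) = -ρ.Q b j (ρ.Q a i v) := fun a b i j v =>
    eq_neg_of_add_eq_zero_left (DFunLike.congr_fun (ρ.Q_Q a b i j) v)
  have PQ : ∀ a b i j v, ¬ (i = j ∧ a = b) → ρ.P a i (ρ.Q b j v) = -ρ.Q b j (ρ.P a i v) := by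
    intro a b i j v hn
    have := ρ.P_Q a b i j
    rw [if_neg hn] at this
    exact eq_neg_of_add_eq_zero_left (DFunLike.congr_fun this v)
  have PQ' : ∀ a i v, ρ.P a i (ρ.Q a i v) + ρ.Q a i (ρ.P a i v) = v := by
    intro a i v
    have := ρ.P_Q a a i i
    rw [if_pos ⟨rfl, rfl⟩] at this
    exact DFunLike.congr_fun this v
  have P2 : ∀ a i v, ρ.P a i (ρ.P a i v) = 0 := fun a i v => DFunLike.congr_fun (ρ.P_sq a i) v
  have Q2 : ∀ a i v, ρ.Q a i (ρ.Q a i v) = 0 := fun a i v => DFunLike.congr_fun (ρ.Q_sq a i) v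
  have QP : ∀ a b i j v, ¬ (i = j ∧ a = b) → ρ.Q a i (ρ.P b j v) = -ρ.P b j (ρ.Q a i v) := by
    intro a b i j v hn
    rw [PQ b a j i v (fun hh => hn ⟨hh.1.symm, hh.2.symm⟩), neg_neg]
  constructor
  · rintro ⟨a, i⟩ ⟨b, j⟩ v
    simp only [mayaA]
    split_ifs
    · exact PP ..
    · exact PQ _ _ _ _ _ (by rintro ⟨_, rfl⟩; contradiction)
    · exact QP _ _ _ _ _ (by rintro ⟨_, rfl⟩; contradiction)
    · exact QQ ..
  · rintro ⟨a, i⟩ v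
    simp only [mayaA]
    split_ifs
    · exact P2 ..
    · exact Q2 ..
  · rintro ⟨a, i⟩ ⟨b, j⟩ v
    simp only [mayaC]
    split_ifs
    · exact QQ ..
    · exact QP _ _ _ _ _ (by rintro ⟨_, rfl⟩; contradiction)
    · exact PQ _ _ _ _ _ (by rintro ⟨_, rfl⟩; contradiction)
    · exact PP ..
  · rintro ⟨a, i⟩ ⟨b, j⟩ v hne
    have hne' : ¬ (i = j ∧ a = b) := by rintro ⟨rfl, rfl⟩; exact hne rfl
    simp only [mayaA, mayaC]
    split_ifs
    · exact PQ _ _ _ _ _ hne'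
    · exact PP ..
    · exact QQ ..
    · exact QP _ _ _ _ _ hne'
  · rintro ⟨a, i⟩ v
    simp only [mayaA, mayaC]
    split_ifs
    · exact eq_sub_of_add_eq (PQ' ..)
    · exact eq_sub_of_add_eq' (PQ' ..)

def mayaL {r : ℕ} (m : MayaDiagram r) (N : ℕ) : List (ℤ × Fin r) :=
  (List.range N).flatMap (fun t : ℕ =>
    ((m.idx ((N : ℤ) - t)).sort (· ≤ ·)).map (fun i => ((N : ℤ) - t, i))) ++
  (List.range (N + 1)).flatMap (fun t : ℕ =>
    ((Finset.univ \ m.idx (-(t : ℤ))).sort (· ≤ ·)).reverse.map (fun i => (-(t : ℤ), i)))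

theorem flatMap_map_prod {α β : Type*} {R : Type*} [Monoid R] (f : β → R) (g : α → List β)
    (l : List α) : ((l.flatMap g).map f).prod = (l.map (fun t => ((g t).map f).prod)).prod := by
  induction l with
  | nil => simp
  | cons x l ih => simp [ih]

theorem mayaL_prod {r : ℕ} {V : Type*} [AddCommGroup V] (ρ : ERep r V) (m : MayaDiagram r)
    (N : ℕ) : Theta ρ m N = mayaSign m • ((mayaL m N).map (mayaC ρ)).prod := by
  unfold Theta mayaL
  simp only [bind_pure_comp, List.map_eq_map, List.map_map]
  rw [List.map_append, List.prod_append, flatMap_map_prod, flatMap_map_prod]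
  congr 3
  · apply List.map_congr_left
    intro t ht
    rw [List.mem_range] at ht
    rw [Function.comp_apply, qaProd, List.map_map]
    congr 1
    apply List.map_congr_left
    intro i _
    have : (0:ℤ) < (N:ℤ) - t := by omega
    simp [mayaC]; omega
  · apply List.map_congr_left
    intro t ht
    rw [Function.comp_apply, paProd, List.map_map]
    congr 1
    apply List.map_congr_left
    intro i _
    have : ¬ (0:ℤ) < -(t:ℤ) := by omega
    simp [mayaC]

theorem mayaL_mem {r : ℕ} (m : MayaDiagram r) (N : ℕ) (h : GoodCutoff m N) (x : ℤ × Fin r) :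
    x ∈ mayaL m N ↔ (0 < x.1 ∧ x.2 ∈ m.idx x.1) ∨ (x.1 ≤ 0 ∧ x.2 ∉ m.idx x.1) := by
  obtain ⟨a, i⟩ := x
  obtain ⟨-, h1, h2⟩ := h
  simp only [mayaL, List.mem_append, List.mem_flatMap, List.mem_range, List.mem_map,
    Finset.mem_sort, List.mem_reverse, Finset.mem_sdiff, Finset.mem_univ, true_and, Prod.mk.injEq]
  constructor
  · rintro (⟨t, ht, j, hj, rfl, rfl⟩ | ⟨t, ht, j, hj, rfl, rfl⟩)
    · left; exact ⟨by omega, hj⟩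
    · right; exact ⟨by omega, hj⟩
  · rintro (⟨ha, hi⟩ | ⟨ha, hi⟩)
    · left
      have : a ≤ N := by
        by_contra hc
        rw [h1 a (by omega)] at hi; simp at hi
      have e : (N:ℤ) - ((N - a).toNat : ℕ) = a := by omega
      exact ⟨(N - a).toNat, by omega, i, by rwa [e], e, rfl⟩
    · right
      have : -(N:ℤ) < a := by
        by_contra hc
        rw [h2 a (by omega)] at hi; simp at hi
      have e : -(((-a).toNat : ℕ) : ℤ) = a := by omega
      exact ⟨(-a).toNat, by omega, i, by rwa [e], e, rfl⟩

theorem mayaL_nodup {r : ℕ} (m : MayaDiagram r) (N : ℕ) : (mayaL m N).Nodup := by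
  unfold mayaL
  refine List.Nodup.append ?_ ?_ ?_
  · rw [List.nodup_flatMap]
    refine ⟨fun t _ => (Finset.sort_nodup _ _).map (fun i j hij => by simpa using hij), ?_⟩
    refine (List.nodup_range (n := N)).imp ?_
    intro s t hst x hx hy
    simp only [List.mem_map] at hx hy
    obtain ⟨i, _, rfl⟩ := hx
    obtain ⟨j, _, hj⟩ := hy
    simp only [Prod.mk.injEq] at hj
    omega
  · rw [List.nodup_flatMap]
    refine ⟨fun t _ => (List.nodup_reverse.2 (Finset.sort_nodup _ _)).map
      (fun i j hij => by simpa using hij), ?_⟩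
    refine (List.nodup_range (n := N + 1)).imp ?_
    intro s t hst x hx hy
    simp only [List.mem_map] at hx hy
    obtain ⟨i, _, rfl⟩ := hx
    obtain ⟨j, _, hj⟩ := hy
    simp only [Prod.mk.injEq] at hj
    omega
  · intro x hx hy
    simp only [List.mem_flatMap, List.mem_map, List.mem_range] at hx hy
    obtain ⟨s, hs, i, _, rfl⟩ := hx
    obtain ⟨t, ht, j, _, hj⟩ := hy
    simp only [Prod.mk.injEq] at hj
    omega

theorem mayaL_succ {r : ℕ} (m : MayaDiagram r) (N : ℕ) (h : GoodCutoff m N) :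
    mayaL m (N + 1) = mayaL m N := by
  obtain ⟨-, h1, h2⟩ := h
  unfold mayaL
  congr 1
  · rw [List.range_succ_eq_map, List.flatMap_cons, List.flatMap_map]
    have e : m.idx (((N + 1 : ℕ) : ℤ) - (0 : ℕ)) = ∅ := h1 _ (by push_cast; omega)
    rw [e]
    simp only [Finset.sort_empty, List.map_nil, List.nil_append]
    congr 1
    funext t
    have : (((N + 1 : ℕ) : ℤ) - (t.succ : ℕ)) = (N : ℤ) - t := by push_cast; omega
    rw [this]
  · rw [List.range_succ (n := N + 1), List.flatMap_append]
    have e : m.idx (-((N + 1 : ℕ) : ℤ)) = Finset.univ := h2 _ (by push_cast; omega)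
    rw [List.flatMap_singleton, e]
    simp

theorem mayaL_le {r : ℕ} (m : MayaDiagram r) (N M : ℕ) (hNM : N ≤ M) (h : GoodCutoff m N) :
    mayaL m M = mayaL m N := by
  induction M, hNM using Nat.le_induction with
  | base => rfl
  | succ M hM ih =>
    rw [mayaL_succ m M ⟨h.1.trans hM, fun a ha => h.2.1 a (by omega),
      fun a ha => h.2.2 a (by omega)⟩, ih]

end FockMaya

/-!
Statement 18: the map `⊕_m W → V`, `(w_m)_m ↦ Σ_m Θ_m(w_m)`, is injective with image
`𝓚_{−∞}(V) ∩ 𝓗_∞(V)`; moreover `Θ_m` does not depend on the choice of cutoff `N`.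
-/

theorem stmt_18 {r : ℕ} (hr : 0 < r) {V : Type} [AddCommGroup V] (ρ : ERep r V)
    (W : AddSubgroup V)
    (hW : ∀ v : V, v ∈ W ↔ ((∀ a : ℤ, 0 < a → ∀ i : Fin r, ρ.P a i v = 0) ∧
      (∀ a : ℤ, a ≤ 0 → ∀ i : Fin r, ρ.Q a i v = 0)))
    (Nc : MayaDiagram r → ℕ) (hNc : ∀ m : MayaDiagram r, GoodCutoff m (Nc m)) :
    -- independence of the choice of cutoff
    (∀ (m : MayaDiagram r) (N₁ N₂ : ℕ), GoodCutoff m N₁ → GoodCutoff m N₂ →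
      Theta ρ m N₁ = Theta ρ m N₂) ∧
    -- the direct-sum map is injective …
    Function.Injective
      (fun g : MayaDiagram r →₀ W => g.sum (fun m w => Theta ρ m (Nc m) (w : V))) ∧
    -- … with image exactly `𝓚_{−∞}(V) ∩ 𝓗_∞(V)`
    Set.range
        (fun g : MayaDiagram r →₀ W => g.sum (fun m w => Theta ρ m (Nc m) (w : V))) =
      {v : V | ∃ k : ℤ, ∀ a : ℤ, a ≤ k → ∀ i : Fin r, ρ.Q a i v = 0} ∩
        {v : V | ∃ k : ℤ, ∀ a : ℤ, k < a → ∀ i : Fin r, ρ.P a i v = 0} := by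
  classical
  have hWA : ∀ v : V, v ∈ W ↔ ∀ x, mayaA ρ x v = 0 := by
    intro v
    rw [hW]
    constructor
    · rintro ⟨h1, h2⟩ ⟨a, i⟩
      simp only [mayaA]
      split_ifs with h
      · exact h1 a h i
      · exact h2 a (not_lt.1 h) i
    · intro h
      refine ⟨fun a ha i => ?_, fun a ha i => ?_⟩
      · have := h (a, i)
        simpa [mayaA, ha] using this
      · have := h (a, i)
        simpa [mayaA, not_lt.2 ha] using this
  have key := (mayaCAR ρ).main W hWA (fun m => mayaL m (Nc m)) (fun m => mayaL_nodup m _)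
    (by
      intro m m' hmm
      have hx : ∀ x, x ∈ mayaL m (Nc m) ↔ x ∈ mayaL m' (Nc m') := by
        intro x
        have := Finset.ext_iff.1 hmm x
        simpa using this
      have : m.idx = m'.idx := by
        funext a
        ext i
        have h := hx (a, i)
        rw [mayaL_mem m _ (hNc m), mayaL_mem m' _ (hNc m')] at h
        simp only at h
        rcases lt_or_ge 0 a with ha | ha
        · simpa [ha, not_le.2 ha] using h
        · simpa [ha, not_lt.2 ha, not_iff_not] using h
      cases m; cases m'; simp only at this; subst this; rfl)
    (by
      intro S
      have hfin : ∃ K : ℤ, ∀ x ∈ S, |x.1| ≤ K := by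
        obtain ⟨K, hK⟩ := (S.image (fun x => |x.1|)).bddAbove
        exact ⟨K, fun x hx => hK (by simpa using ⟨x.1, ⟨x.2, hx⟩, rfl⟩)⟩
      obtain ⟨K, hK⟩ := hfin
      let m : MayaDiagram r :=
        { idx := fun a => if 0 < a then Finset.univ.filter (fun i => (a, i) ∈ S)
            else Finset.univ.filter (fun i => (a, i) ∉ S)
          eventually_full := ⟨min 0 (-K), fun a ha => by
            rw [if_neg (by omega), Finset.filter_true_of_mem]
            intro i _ hi
            have := hK _ hi
            simp only [abs_le] at this
            omega⟩
          eventually_empty := ⟨max 0 K, fun a ha => by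
            rw [if_pos (by omega), Finset.filter_false_of_mem]
            intro i _ hi
            have := hK _ hi
            simp only [abs_le] at this
            omega⟩ }
      refine ⟨m, ?_⟩
      ext ⟨a, i⟩
      simp only [List.mem_toFinset]
      rw [mayaL_mem m _ (hNc m)]
      rcases lt_or_ge 0 a with ha | ha
      · simp [m, ha, not_le.2 ha]
      · simp [m, ha, not_lt.2 ha])
    (fun m => Theta ρ m (Nc m))
    (by
      intro m
      simp only [mayaL_prod, mayaSign]
      rcases neg_one_pow_eq_or ℤ (∑ᶠ k ∈ {k : ℤ | k ≤ 0}, ((-k).toNat * r * (r - (m.idx k).card)))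
        with e | e <;> rw [e] <;> simp)
  refine ⟨?_, key.1, ?_⟩
  · intro m N₁ N₂ h1 h2
    rw [mayaL_prod, mayaL_prod]
    rcases le_total N₁ N₂ with h | h
    · rw [mayaL_le m N₁ N₂ h h1]
    · rw [mayaL_le m N₂ N₁ h h2]
  · rw [key.2]
    ext v
    constructor
    · rintro ⟨B, hB⟩
      obtain ⟨K, hK⟩ := (B.image (fun x => |x.1|)).bddAbove
      have hK' : ∀ x ∈ B, |x.1| ≤ K := fun x hx => hK (by simpa using ⟨x.1, ⟨x.2, hx⟩, rfl⟩)
      refine ⟨⟨min 0 (-K - 1), fun a ha i => ?_⟩, ⟨max 0 K, fun a ha i => ?_⟩⟩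
      · have := hB (a, i) (fun hx => by
          have := hK' _ hx
          simp only [abs_le] at this
          omega)
        rwa [mayaA, if_neg (by simp only; omega)] at this
      · have := hB (a, i) (fun hx => by
          have := hK' _ hx
          simp only [abs_le] at this
          omega)
        rwa [mayaA, if_pos (by simp only; omega)] at this
    · rintro ⟨⟨k, hk⟩, ⟨l, hl⟩⟩
      refine ⟨Finset.Icc (min k 0) (max l 0) ×ˢ Finset.univ, ?_⟩
      rintro ⟨a, i⟩ hx
      simp only [Finset.mem_product, Finset.mem_Icc, Finset.mem_univ, and_true] at hx
      simp only [mayaA]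
      split_ifs with h
      · exact hl a (by omega) i
      · exact hk a (by omega) i
end
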